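/- arXiv:1403.0418 — 3 statements merged into one kernel-verified Lean document; each statement's English description precedes it below -/
import Mathlib

section
/- Let ρ be a two-qubit state (4×4 positive semidefinite complex matrix of unit trace) with ‖b‖ < 1, and let λ₁ ≥ λ₂ ≥ λ₃ ≥ λ₄ ≥ 0 be nonnegative reals such that the characteristic polynomial of ρ·ρ̂ equals ∏ᵢ (X − λᵢ²). Then λ₁ − λ₂ − λ₃ − λ₄ ≤ √(1 − ‖b‖²)·√(1 − ‖c_A‖), and in particular C(ρ) ≤ √(1 − ‖c_A‖): the concurrence of any two-qubit state whose steering ellipsoid has centre of norm c is at most √(1 − c). -/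
open Matrix Kronecker Polynomial
open scoped ComplexOrder

noncomputable section

/-- The Pauli matrices: `pauli 0 = I₂`, `pauli 1 = σ₁`, `pauli 2 = σ₂`, `pauli 3 = σ₃`. -/
def pauli : Fin 4 → Matrix (Fin 2) (Fin 2) ℂ
  | 0 => !![1, 0; 0, 1]
  | 1 => !![0, 1; 1, 0]
  | 2 => !![0, -Complex.I; Complex.I, 0]
  | 3 => !![1, 0; 0, -1]

/-- Euclidean norm of a vector in ℝ³. -/
def norm3 (v : Fin 3 → ℝ) : ℝ := Real.sqrt (∑ i, v i ^ 2)

/-- The canonical axis-aligned two-qubit operator with steering-ellipsoid centre `c`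
and signed semiaxes `t`:
`ρ̃(c,t) = (1/4)(I₄ + Σᵢ cᵢ (σᵢ⊗σ₀) + Σᵢ tᵢ (σᵢ⊗σᵢ))`. -/
def rhoTilde (c t : Fin 3 → ℝ) : Matrix (Fin 2 × Fin 2) (Fin 2 × Fin 2) ℂ :=
  (1 / 4 : ℂ) • ((1 : Matrix (Fin 2 × Fin 2) (Fin 2 × Fin 2) ℂ)
    + ∑ i : Fin 3, (c i : ℂ) • (pauli i.succ ⊗ₖ pauli 0)
    + ∑ i : Fin 3, (t i : ℂ) • (pauli i.succ ⊗ₖ pauli i.succ))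

/-- The Pauli-basis expansion matrix `Θ(ρ)_{μν} = Re tr(ρ (σ_μ ⊗ σ_ν))`. -/
def Theta (ρ : Matrix (Fin 2 × Fin 2) (Fin 2 × Fin 2) ℂ) : Matrix (Fin 4) (Fin 4) ℝ :=
  Matrix.of fun μ ν => ((ρ * (pauli μ ⊗ₖ pauli ν)).trace).re

/-- The spin-flipped matrix `ρ̂ = (σ₂⊗σ₂)·conj(ρ)·(σ₂⊗σ₂)`. -/
def spinFlip (ρ : Matrix (Fin 2 × Fin 2) (Fin 2 × Fin 2) ℂ) :
    Matrix (Fin 2 × Fin 2) (Fin 2 × Fin 2) ℂ :=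
  (pauli 2 ⊗ₖ pauli 2) * ρ.map (starRingEnd ℂ) * (pauli 2 ⊗ₖ pauli 2)

/-!
Write `ρ = V Vᴴ` and `τ = Vᵀ (σ₂ ⊗ σ₂) V`. The numbers `λᵢ` are the singular values of the
symmetric matrix `τ`, so Takagi's factorization `τ = Uᴴᵀ D Uᴴ` and the triangle inequality give
`λ₁ - λ₂ - λ₃ - λ₄ ≤ ∑ₖ |τₖₖ|` for every such `V`.

A local filter `F` with `F β Fᴴ = 1`, where `β` is Bob's marginal, multiplies all `λᵢ` by
`|det F| = 2 / √(1 - ‖b‖²)`; it turns Bob's marginal into `1` and Alice's into `1 + c_A · σ`, whose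
smaller eigenvalue is `1 - ‖c_A‖`. Local unitaries then diagonalize Alice's marginal and annihilate
the entry of the state at `((0, 1), (1, 0))`. The rows `(0, 1)` and `(1, 0)` of `V` are then
orthogonal, so the columns of `V` can be mixed by a unitary until each has a zero in one of these
two rows. Only `τₖₖ = -2 V₀₀ₖ V₁₁ₖ` survives, and Cauchy-Schwarz bounds `∑ₖ |τₖₖ|` by
`2 √ρ₀₀,₀₀ √ρ₁₁,₁₁ ≤ 2 √(1 - ‖c_A‖)`.
-/

/-! ### Takagi's factorization -/

section Takagi

open scoped InnerProductSpace

variable {E : Type*} [NormedAddCommGroup E] [InnerProductSpace ℂ E]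

lemma exists_unit_antilinear_eigenvector [FiniteDimensional ℂ E] [Nontrivial E]
    (J : E →ₗ⋆[ℂ] E) (hJ : ∀ x y, ⟪x, J y⟫_ℂ = ⟪y, J x⟫_ℂ) :
    ∃ (x : E) (d : ℝ), ‖x‖ = 1 ∧ 0 ≤ d ∧ J x = (d : ℂ) • x := by
  let : InnerProductSpace ℝ E := InnerProductSpace.complexToReal
  let T : E →ₗ[ℝ] E :=
    { toFun := J
      map_add' := map_add J
      map_smul' := fun r x => by simp [← Complex.coe_smul] }
  have hT : T.IsSymmetric := fun x y => by
    rw [real_inner_comm]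
    exact congrArg Complex.re (hJ y x)
  obtain ⟨x, hx⟩ := hT.hasEigenvalue_iSup_of_finiteDimensional.exists_hasEigenvector
  set μ : ℝ := ⨆ x : { x : E // x ≠ 0 }, RCLike.re ⟪T x, x⟫_ℝ / ‖(x : E)‖ ^ 2
  have hJx : J x = (μ : ℂ) • x := hx.apply_eq_smul.trans (Complex.coe_smul μ x).symm
  obtain ⟨u, hu, hJu⟩ : ∃ u : E, ‖u‖ = 1 ∧ J u = (μ : ℂ) • u := by
    refine ⟨((‖x‖⁻¹ : ℝ) : ℂ) • x, ?_, ?_⟩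
    · simp [norm_smul, inv_mul_cancel₀ (norm_ne_zero_iff.mpr hx.2)]
    · rw [map_smulₛₗ, hJx, Complex.conj_ofReal, smul_comm]
  -- Since `J` is antilinear, multiplying an eigenvector by `I` flips the sign of its eigenvalue.
  rcases le_total 0 μ with hμ | hμ
  · exact ⟨u, μ, hu, hμ, hJu⟩
  · refine ⟨Complex.I • u, -μ, by simp [norm_smul, hu], neg_nonneg.mpr hμ, ?_⟩
    rw [map_smulₛₗ, hJu, Complex.conj_I, smul_smul, smul_smul, Complex.ofReal_neg, neg_mul_comm,
      mul_comm]

lemma exists_orthonormal_antilinear_eigenvectors [FiniteDimensional ℂ E]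
    (J : E →ₗ⋆[ℂ] E) (hJ : ∀ x y, ⟪x, J y⟫_ℂ = ⟪y, J x⟫_ℂ)
    (k : ℕ) (hk : k ≤ Module.finrank ℂ E) :
    ∃ (v : Fin k → E) (d : Fin k → ℝ),
      Orthonormal ℂ v ∧ (∀ i, 0 ≤ d i) ∧ ∀ i, J (v i) = (d i : ℂ) • v i := by
  induction k with
  | zero => exact ⟨Fin.elim0, Fin.elim0, .of_isEmpty _, fun i => i.elim0, fun i => i.elim0⟩
  | succ k ih =>
    obtain ⟨v, d, hv, hd, hJv⟩ := ih (by omega)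
    let K : Submodule ℂ E := (Submodule.span ℂ (Set.range v))ᗮ
    have mem_K (x : E) : x ∈ K ↔ ∀ i, ⟪v i, x⟫_ℂ = 0 := by
      simp only [K, Submodule.span_range_eq_iSup, ← Submodule.iInf_orthogonal, Submodule.mem_iInf,
        Submodule.mem_orthogonal_singleton_iff_inner_right]
    have hJK : ∀ x ∈ K, J x ∈ K := fun x hx => by
      rw [mem_K] at hx ⊢
      intro i
      rw [hJ, hJv, inner_smul_right, inner_eq_zero_symm.mp (hx i), mul_zero]
    have : Nontrivial K := by
      apply Module.nontrivial_of_finrank_pos (R := ℂ)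
      have := (Submodule.span ℂ (Set.range v)).finrank_add_finrank_orthogonal
      rw [finrank_span_eq_card hv.linearIndependent, Fintype.card_fin] at this
      change 0 < Module.finrank ℂ (Submodule.span ℂ (Set.range v))ᗮ
      omega
    obtain ⟨u, l, hu, hl, hJu⟩ :=
      exists_unit_antilinear_eigenvector (J.restrict hJK) fun x y => hJ x y
    refine ⟨vecCons u v, vecCons l d, ?_, ?_, ?_⟩
    · rw [orthonormal_vecCons_iff]
      exact ⟨hu, fun i => inner_eq_zero_symm.mp ((mem_K u).mp u.2 i), hv⟩
    · exact Fin.cases hl hd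
    · exact Fin.cases (congrArg Subtype.val hJu) hJv

lemma exists_orthonormalBasis_antilinear_eigenvectors {ι : Type*} [Fintype ι]
    (J : E →ₗ⋆[ℂ] E) (hJ : ∀ x y, ⟪x, J y⟫_ℂ = ⟪y, J x⟫_ℂ) (b₀ : OrthonormalBasis ι ℂ E) :
    ∃ (b : OrthonormalBasis ι ℂ E) (d : ι → ℝ),
      (∀ i, 0 ≤ d i) ∧ ∀ i, J (b i) = (d i : ℂ) • b i := by
  have := b₀.toBasis.finiteDimensional_of_finite
  obtain ⟨v, d, hv, hd, hJv⟩ := exists_orthonormal_antilinear_eigenvectors J hJ _ le_rfl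
  let e : ι ≃ Fin (Module.finrank ℂ E) :=
    Fintype.equivFinOfCardEq (Module.finrank_eq_card_basis b₀.toBasis).symm
  refine ⟨(OrthonormalBasis.mk hv ?_).reindex e.symm, d ∘ e, fun i => hd _, fun i => ?_⟩
  · exact (hv.linearIndependent.span_eq_top_of_card_eq_finrank' (by simp)).ge
  · simpa using hJv (e i)

end Takagi

/-! ### Diagonal and singular values of symmetric matrices -/

section SpectralBounds

variable {ι κ n : Type*} [Fintype ι] [Fintype κ] [Fintype n]

lemma exists_takagi_factorization [DecidableEq n] {τ : Matrix n n ℂ} (hτ : τ.IsSymm) :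
    ∃ U ∈ unitaryGroup n ℂ, ∃ d : n → ℝ, (∀ i, 0 ≤ d i) ∧
      τ = Uᴴᵀ * diagonal (fun i => (d i : ℂ)) * Uᴴ := by
  let J : EuclideanSpace ℂ n →ₗ⋆[ℂ] EuclideanSpace ℂ n :=
    { toFun := fun x => WithLp.toLp 2 (star (τ *ᵥ x))
      map_add' := fun x y => by simp [mulVec_add]
      map_smul' := fun c x => by simp [mulVec_smul] }
  have hJ (x y : EuclideanSpace ℂ n) : inner ℂ x (J y) = inner ℂ y (J x) := by
    simp only [J, EuclideanSpace.inner_eq_star_dotProduct, LinearMap.coe_mk, AddHom.coe_mk]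
    rw [star_dotProduct_star, star_dotProduct_star, dotProduct_mulVec, ← mulVec_transpose, hτ.eq,
      dotProduct_comm]
  obtain ⟨v, d, hd, hJv⟩ :=
    exists_orthonormalBasis_antilinear_eigenvectors J hJ (EuclideanSpace.basisFun n ℂ)
  let U : Matrix n n ℂ := (EuclideanSpace.basisFun n ℂ).toBasis.toMatrix v
  have hU : U ∈ unitaryGroup n ℂ := OrthonormalBasis.toMatrix_orthonormalBasis_mem_unitary _ _
  have hτU : τ * U = Uᴴᵀ * diagonal (fun i => (d i : ℂ)) := by
    ext i j
    have h := congrArg (fun x : EuclideanSpace ℂ n => star (x i)) (hJv j)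
    rw [mul_diagonal]
    simpa [J, U, mul_apply, mulVec, dotProduct, Module.Basis.toMatrix_apply, mul_comm] using h
  refine ⟨U, hU, d, hd, ?_⟩
  rw [← hτU, Matrix.mul_assoc, ← star_eq_conjTranspose, mem_unitaryGroup_iff.mp hU, Matrix.mul_one]

lemma two_mul_norm_sub_sum_norm_le_norm_sum {E : Type*} [SeminormedAddCommGroup E]
    (z : ι → E) (i : ι) : 2 * ‖z i‖ - ∑ j, ‖z j‖ ≤ ‖∑ j, z j‖ := by
  classical
  rw [← Finset.add_sum_erase _ (fun j => ‖z j‖) (Finset.mem_univ i),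
    ← Finset.add_sum_erase _ z (Finset.mem_univ i)]
  have h_rest := norm_sum_le (Finset.univ.erase i) z
  have h_tri := norm_le_add_norm_add (z i) (∑ j ∈ Finset.univ.erase i, z j)
  linarith

lemma sum_norm_sq_col_of_mem_unitaryGroup [DecidableEq n] {U : Matrix n n ℂ}
    (hU : U ∈ unitaryGroup n ℂ) (j : n) : ∑ i, ‖U i j‖ ^ 2 = 1 := by
  have h := congrFun (congrFun (mem_unitaryGroup_iff'.mp hU) j) j
  simp only [mul_apply, star_apply, one_apply_eq, Complex.star_def, Complex.conj_mul'] at h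
  exact_mod_cast h

lemma two_mul_sub_sum_le_sum_norm_diag_of_takagi [DecidableEq n] {U : Matrix n n ℂ}
    (hU : U ∈ unitaryGroup n ℂ) {d : n → ℝ} (hd : ∀ i, 0 ≤ d i) (j : n) :
    2 * d j - ∑ k, d k ≤
      ∑ i, ‖(Uᴴᵀ * diagonal (fun k => (d k : ℂ)) * Uᴴ) i i‖ := by
  have h_entry (i : n) : (Uᴴᵀ * diagonal (fun k => (d k : ℂ)) * Uᴴ) i i =
      ∑ k, (d k : ℂ) * star (U i k) ^ 2 := by
    rw [mul_apply]
    refine Finset.sum_congr rfl fun k _ => ?_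
    rw [mul_diagonal, transpose_apply, conjTranspose_apply]
    ring
  have h_norm (i k : n) : ‖(d k : ℂ) * star (U i k) ^ 2‖ = d k * ‖U i k‖ ^ 2 := by
    simp [abs_of_nonneg (hd k)]
  have h_col (k : n) : ∑ i, d k * ‖U i k‖ ^ 2 = d k := by
    rw [← Finset.mul_sum, sum_norm_sq_col_of_mem_unitaryGroup hU, mul_one]
  calc 2 * d j - ∑ k, d k
      = ∑ i, (2 * (d j * ‖U i j‖ ^ 2) - ∑ k, d k * ‖U i k‖ ^ 2) := by
        rw [Finset.sum_sub_distrib, ← Finset.mul_sum, h_col, Finset.sum_comm]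
        simp only [h_col]
    _ ≤ _ := by
        refine Finset.sum_le_sum fun i _ => ?_
        have h := two_mul_norm_sub_sum_norm_le_norm_sum
          (fun k => (d k : ℂ) * star (U i k) ^ 2) j
        simpa only [h_norm, ← h_entry] using h

lemma roots_prod_univ_X_sub_C {R : Type*} [CommRing R] [IsDomain R] (a : ι → R) :
    (∏ i, (X - C (a i))).roots = Finset.univ.val.map a := by
  rw [← roots_multiset_prod_X_sub_C (Finset.univ.val.map a), Multiset.map_map]
  rfl

lemma map_sqrt_re_roots_prod_X_sub_C_sq {d : ι → ℝ} (hd : ∀ i, 0 ≤ d i) :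
    (∏ i, (X - C ((d i : ℂ) ^ 2))).roots.map (fun z : ℂ => √z.re) = Finset.univ.val.map d := by
  rw [roots_prod_univ_X_sub_C, Multiset.map_map]
  refine Multiset.map_congr rfl fun i _ => ?_
  rw [Function.comp_apply, ← Complex.ofReal_pow, Complex.ofReal_re, Real.sqrt_sq (hd i)]

lemma map_univ_eq_of_prod_X_sub_C_sq_eq {d : κ → ℝ} {lam : ι → ℝ} (hd : ∀ j, 0 ≤ d j)
    (hlam : ∀ i, 0 ≤ lam i)
    (h : ∏ j, (X - C ((d j : ℂ) ^ 2)) = ∏ i, (X - C ((lam i : ℂ) ^ 2))) :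
    Finset.univ.val.map d = Finset.univ.val.map lam := by
  rw [← map_sqrt_re_roots_prod_X_sub_C_sq hd, ← map_sqrt_re_roots_prod_X_sub_C_sq hlam, h]

lemma charpoly_conjTranspose_mul_self_of_takagi [DecidableEq n] {U : Matrix n n ℂ}
    (hU : U ∈ unitaryGroup n ℂ) (d : n → ℝ) {τ : Matrix n n ℂ}
    (hτ : τ = Uᴴᵀ * diagonal (fun i => (d i : ℂ)) * Uᴴ) :
    (τᴴ * τ).charpoly = ∏ i, (X - C ((d i : ℂ) ^ 2)) := by
  have hU₁ : Uᴴ * U = 1 := mem_unitaryGroup_iff'.mp hU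
  have hU₂ : Uᵀ * Uᴴᵀ = 1 := by rw [← transpose_mul, hU₁, transpose_one]
  have hτ' : τᴴ = U * diagonal (fun i => (d i : ℂ)) * Uᵀ := by
    have h_real : star (fun i => (d i : ℂ)) = fun i => (d i : ℂ) :=
      funext fun i => Complex.conj_ofReal (d i)
    have h_conj : Uᴴᵀᴴ = Uᵀ := congrArg transpose (conjTranspose_conjTranspose U)
    rw [hτ, conjTranspose_mul, conjTranspose_mul, conjTranspose_conjTranspose,
      diagonal_conjTranspose, h_real, h_conj, Matrix.mul_assoc]
  calc (τᴴ * τ).charpoly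
      = (U * (diagonal (fun i => (d i : ℂ)) * (Uᵀ * Uᴴᵀ) *
          diagonal (fun i => (d i : ℂ)) * Uᴴ)).charpoly := by
        rw [hτ', hτ]; simp only [Matrix.mul_assoc]
    _ = (diagonal (fun i => (d i : ℂ) ^ 2)).charpoly := by
        rw [hU₂, Matrix.mul_one, diagonal_mul_diagonal, charpoly_mul_comm, Matrix.mul_assoc, hU₁,
          Matrix.mul_one]
        simp only [pow_two]
    _ = _ := charpoly_diagonal _

theorem two_mul_sub_sum_le_sum_norm_diag [DecidableEq κ] {τ : Matrix κ κ ℂ} (hτ : τ.IsSymm)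
    {lam : ι → ℝ} (hlam : ∀ i, 0 ≤ lam i)
    (hchar : (τᴴ * τ).charpoly = ∏ i, (X - C ((lam i : ℂ) ^ 2))) (i : ι) :
    2 * lam i - ∑ j, lam j ≤ ∑ k, ‖τ k k‖ := by
  obtain ⟨U, hU, d, hd, hτU⟩ := exists_takagi_factorization hτ
  have h_map : Finset.univ.val.map d = Finset.univ.val.map lam :=
    map_univ_eq_of_prod_X_sub_C_sq_eq hd hlam <| by
      rw [← charpoly_conjTranspose_mul_self_of_takagi hU d hτU, hchar]
  have h_sum : ∑ k, d k = ∑ j, lam j := congrArg Multiset.sum h_map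
  obtain ⟨k, -, hk⟩ : ∃ k ∈ Finset.univ.val, d k = lam i :=
    Multiset.mem_map.mp (h_map ▸ Multiset.mem_map_of_mem lam (Finset.mem_univ_val i))
  rw [← h_sum, ← hk, hτU]
  exact two_mul_sub_sum_le_sum_norm_diag_of_takagi hU hd k

lemma charpoly_smul_of_eq_prod {K : Type*} [Field K] [Infinite K] [DecidableEq n]
    {A : Matrix n n K} {a : ι → K} (h : A.charpoly = ∏ i, (X - C (a i))) (c : K) :
    (c • A).charpoly = ∏ i, (X - C (c * a i)) := by
  have h_card : Fintype.card n = Fintype.card ι := by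
    simpa using congrArg natDegree h
  rcases eq_or_ne c 0 with rfl | hc
  · simp [charpoly_zero, h_card]
  refine Polynomial.funext fun t => ?_
  have h_scale : scalar n t - c • A = c • (scalar n (c⁻¹ * t) - A) := by
    rw [smul_sub, scalar_apply, scalar_apply, ← diagonal_smul]
    congr 2
    ext
    simp [hc]
  rw [eval_charpoly, h_scale, det_smul, ← eval_charpoly, h, eval_prod, eval_prod, h_card,
    ← Finset.card_univ, ← Finset.prod_const, ← Finset.prod_mul_distrib]
  refine Finset.prod_congr rfl fun i _ => ?_
  simp only [eval_sub, eval_X, eval_C]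
  field_simp

lemma vecMul_eigenvectorUnitary_eq_zero_or [DecidableEq n] {A : Matrix n n ℂ} (hA : A.IsHermitian)
    {x : n → ℂ} {s : ℂ} (hx : x ᵥ* A = s • x) (k : n) :
    (x ᵥ* (hA.eigenvectorUnitary : Matrix n n ℂ)) k = 0 ∨ (hA.eigenvalues k : ℂ) = s := by
  set U : Matrix n n ℂ := hA.eigenvectorUnitary.1
  have hAU : A *ᵥ U.col k = (hA.eigenvalues k : ℂ) • U.col k := by
    simpa [U, IsHermitian.eigenvectorUnitary_col_eq] using hA.mulVec_eigenvectorBasis k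
  have h : x ⬝ᵥ (A *ᵥ U.col k) = s * (x ⬝ᵥ U.col k) := by
    rw [dotProduct_mulVec, hx, smul_dotProduct, smul_eq_mul]
  rw [hAU, dotProduct_smul, smul_eq_mul] at h
  exact (mul_eq_mul_right_iff.mp h).symm

lemma exists_unitary_vecMul_mul_vecMul_eq_zero [DecidableEq n] {x y : n → ℂ}
    (hxy : x ⬝ᵥ star y = 0) :
    ∃ Q ∈ unitaryGroup n ℂ, ∀ k, (x ᵥ* Q) k * (y ᵥ* Q) k = 0 := by
  have hA : (vecMulVec (star y) y).IsHermitian := by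
    ext i j
    simp [vecMulVec_apply, mul_comm]
  have hx : x ᵥ* vecMulVec (star y) y = (0 : ℂ) • x := by
    rw [vecMul_vecMulVec, hxy, zero_smul, zero_smul]
  have hy : y ᵥ* vecMulVec (star y) y = (y ⬝ᵥ star y) • y := vecMul_vecMulVec _ _ _
  refine ⟨hA.eigenvectorUnitary.1, hA.eigenvectorUnitary.2, fun k => ?_⟩
  rcases vecMul_eigenvectorUnitary_eq_zero_or hA hx k with hxk | hxk
  · rw [hxk, zero_mul]
  rcases vecMul_eigenvectorUnitary_eq_zero_or hA hy k with hyk | hyk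
  · rw [hyk, mul_zero]
  obtain rfl : y = 0 := dotProduct_self_star_eq_zero.mp (hyk.symm.trans hxk)
  simp

lemma exists_unit_eigenvector [Nonempty n] (B : Matrix n n ℂ) :
    ∃ (x : n → ℂ) (μ : ℂ), x ⬝ᵥ star x = 1 ∧ B *ᵥ x = μ • x := by
  classical
  obtain ⟨μ, hμ⟩ := Module.End.exists_eigenvalue (toEuclideanLin B)
  obtain ⟨x, hx⟩ := hμ.exists_hasEigenvector
  have hBx : B *ᵥ x.ofLp = μ • x.ofLp := congrArg WithLp.ofLp hx.apply_eq_smul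
  refine ⟨((‖x‖⁻¹ : ℝ) : ℂ) • x.ofLp, μ, ?_, ?_⟩
  · rw [← WithLp.ofLp_smul, ← EuclideanSpace.inner_eq_star_dotProduct, inner_self_eq_norm_sq_to_K,
      norm_smul]
    simp [hx.2]
  · rw [mulVec_smul, hBx, smul_comm]

lemma exists_unitary_conj_apply_one_zero_eq_zero (B : Matrix (Fin 2) (Fin 2) ℂ) :
    ∃ S ∈ unitaryGroup (Fin 2) ℂ, (S * B * Sᴴ) 1 0 = 0 := by
  obtain ⟨x, μ, hx, hBx⟩ := exists_unit_eigenvector B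
  let S : Matrix (Fin 2) (Fin 2) ℂ := !![star (x 0), star (x 1); -x 1, x 0]
  have hS_star : Sᴴ = !![x 0, -star (x 1); x 1, star (x 0)] := by
    ext i j
    fin_cases i <;> fin_cases j <;> simp [S]
  have h_col : (Sᴴ).col 0 = x := by
    rw [hS_star]
    ext i
    fin_cases i <;> rfl
  have h_orth : S.row 1 ⬝ᵥ x = 0 := by
    simp [S, dotProduct, mul_comm]
  refine ⟨S, ?_, ?_⟩
  · rw [dotProduct, Fin.sum_univ_two] at hx
    have h_norm : star (x 0) * x 0 + star (x 1) * x 1 = 1 := by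
      linear_combination hx
    have h_norm' : -x 1 * -star (x 1) + x 0 * star (x 0) = 1 := by
      linear_combination h_norm
    rw [mem_unitaryGroup_iff, star_eq_conjTranspose, hS_star, mul_fin_two, one_fin_two, h_norm,
      h_norm']
    congr! 3 <;> ring_nf
  · calc (S * B * Sᴴ) 1 0 = S.row 1 ⬝ᵥ (B *ᵥ (Sᴴ).col 0) := by
          rw [Matrix.mul_assoc]; rfl
      _ = 0 := by
          rw [h_col, hBx, dotProduct_smul, h_orth, smul_zero]

open scoped MatrixOrder Matrix.Norms.L2Operator in
lemma exists_eq_mul_conjTranspose_of_posSemidef {M : Matrix n n ℂ}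
    (hM : M.PosSemidef) : ∃ V : Matrix n n ℂ, M = V * Vᴴ := by
  classical
  refine ⟨CFC.sqrt M, ?_⟩
  rw [(CFC.sqrt_nonneg M).posSemidef.1.eq, CFC.sqrt_mul_sqrt_self M hM.nonneg]

end SpectralBounds

/-! ### Wootters' decomposition matrix -/

lemma pauli_zero : pauli 0 = 1 := one_fin_two.symm

lemma isHermitian_pauli (i : Fin 4) : (pauli i).IsHermitian := by
  fin_cases i <;> ext j k <;> fin_cases j <;> fin_cases k <;> simp [pauli]

lemma isHermitian_pauli_kronecker_pauli (i j : Fin 4) : (pauli i ⊗ₖ pauli j).IsHermitian := by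
  rw [IsHermitian, conjTranspose_kronecker, isHermitian_pauli, isHermitian_pauli]

lemma transpose_mul_pauli_two_mul (P : Matrix (Fin 2) (Fin 2) ℂ) :
    Pᵀ * pauli 2 * P = P.det • pauli 2 := by
  ext i j
  fin_cases i <;> fin_cases j <;> simp [pauli, mul_apply, det_fin_two] <;> ring

lemma isSymm_pauli_two_kronecker_pauli_two : (pauli 2 ⊗ₖ pauli 2).IsSymm := by
  have h_antisymm : (pauli 2)ᵀ = -pauli 2 := by
    ext i j
    fin_cases i <;> fin_cases j <;> simp [pauli]
  rw [IsSymm, ← kroneckerMap_transpose, h_antisymm]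
  ext
  simp

lemma spinFlip_of_isHermitian {ρ : Matrix (Fin 2 × Fin 2) (Fin 2 × Fin 2) ℂ}
    (hρ : ρ.IsHermitian) :
    spinFlip ρ = (pauli 2 ⊗ₖ pauli 2) * ρᵀ * (pauli 2 ⊗ₖ pauli 2) := by
  have h_conj : ρ.map (starRingEnd ℂ) = ρᵀ := by
    conv_rhs => rw [← hρ.eq]
    rfl
  rw [spinFlip, h_conj]

/-- Wootters' matrix of the decomposition of a two-qubit operator `V Vᴴ` into the columns of `V`:
its entries are the overlaps of the columns with their spin flips. -/
def tangleMatrix {n : Type*} (V : Matrix (Fin 2 × Fin 2) n ℂ) : Matrix n n ℂ :=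
  Vᵀ * (pauli 2 ⊗ₖ pauli 2) * V

section Tangle

variable {n : Type*} (V : Matrix (Fin 2 × Fin 2) n ℂ)

lemma isSymm_tangleMatrix : (tangleMatrix V).IsSymm := by
  rw [IsSymm, tangleMatrix, transpose_mul, transpose_mul, transpose_transpose,
    isSymm_pauli_two_kronecker_pauli_two.eq, Matrix.mul_assoc]

lemma tangleMatrix_apply_self (k : n) :
    tangleMatrix V k k = 2 * (V (0, 1) k * V (1, 0) k - V (0, 0) k * V (1, 1) k) := by
  simp only [tangleMatrix, pauli, mul_apply, transpose_apply, kroneckerMap_apply, of_apply,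
    cons_val', cons_val_fin_one, Fintype.sum_prod_type, Fin.sum_univ_two, cons_val_zero,
    cons_val_one]
  linear_combination
    2 * (V (0, 0) k * V (1, 1) k - V (0, 1) k * V (1, 0) k) * Complex.I_mul_I

end Tangle

lemma charpoly_mul_conjTranspose_mul_spinFlip (V : Matrix (Fin 2 × Fin 2) (Fin 2 × Fin 2) ℂ) :
    (V * Vᴴ * spinFlip (V * Vᴴ)).charpoly = ((tangleMatrix V)ᴴ * tangleMatrix V).charpoly := by
  have hS : (pauli 2 ⊗ₖ pauli 2)ᴴ = pauli 2 ⊗ₖ pauli 2 := isHermitian_pauli_kronecker_pauli 2 2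
  calc (V * Vᴴ * spinFlip (V * Vᴴ)).charpoly
      = (V * (Vᴴ * (pauli 2 ⊗ₖ pauli 2) * Vᵀᴴ * Vᵀ * (pauli 2 ⊗ₖ pauli 2))).charpoly := by
        rw [spinFlip_of_isHermitian (isHermitian_mul_conjTranspose_self V), transpose_mul]
        simp only [Matrix.mul_assoc]
        rfl
    _ = ((tangleMatrix V)ᴴ * tangleMatrix V).charpoly := by
        rw [charpoly_mul_comm, tangleMatrix, conjTranspose_mul, conjTranspose_mul, hS]
        simp only [Matrix.mul_assoc]

/-- `lam` lists the square roots of the eigenvalues of `ρ ρ̂` (in no particular order), so that the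
concurrence of `ρ` is `max 0 (2 * lam i - ∑ j, lam j)` for a maximal `lam i`. -/
def IsConcurrenceSpectrum (ρ : Matrix (Fin 2 × Fin 2) (Fin 2 × Fin 2) ℂ) (lam : Fin 4 → ℝ) :
    Prop :=
  (∀ i, 0 ≤ lam i) ∧ (ρ * spinFlip ρ).charpoly = ∏ i, (X - C ((lam i : ℂ) ^ 2))

theorem two_mul_sub_sum_le_sum_norm_tangleMatrix {V : Matrix (Fin 2 × Fin 2) (Fin 2 × Fin 2) ℂ}
    {lam : Fin 4 → ℝ} (h : IsConcurrenceSpectrum (V * Vᴴ) lam) (i : Fin 4) :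
    2 * lam i - ∑ j, lam j ≤ ∑ k, ‖tangleMatrix V k k‖ :=
  two_mul_sub_sum_le_sum_norm_diag (isSymm_tangleMatrix V) h.1
    ((charpoly_mul_conjTranspose_mul_spinFlip V).symm.trans h.2) i

lemma sum_norm_sq_eq_re_mul_conjTranspose_apply_self {m n : Type*} [Fintype n] (V : Matrix m n ℂ)
    (p : m) : ∑ k, ‖V p k‖ ^ 2 = ((V * Vᴴ) p p).re := by
  simp only [mul_apply, conjTranspose_apply, Complex.re_sum, Complex.star_def, Complex.mul_conj',
    ← Complex.ofReal_pow, Complex.ofReal_re]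

lemma sum_norm_mul_le_sqrt_mul_sqrt {m n : Type*} [Fintype n] (V : Matrix m n ℂ) (p q : m) :
    ∑ k, ‖V p k * V q k‖ ≤ √((V * Vᴴ) p p).re * √((V * Vᴴ) q q).re := by
  simp only [norm_mul, ← sum_norm_sq_eq_re_mul_conjTranspose_apply_self]
  exact Real.sum_mul_le_sqrt_mul_sqrt _ _ _

theorem two_mul_sub_sum_le_of_apply_eq_zero {M : Matrix (Fin 2 × Fin 2) (Fin 2 × Fin 2) ℂ}
    (hM : M.PosSemidef) (hM_offdiag : M (0, 1) (1, 0) = 0) {lam : Fin 4 → ℝ}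
    (h : IsConcurrenceSpectrum M lam) (i : Fin 4) :
    2 * lam i - ∑ j, lam j ≤ 2 * (√(M (0, 0) (0, 0)).re * √(M (1, 1) (1, 1)).re) := by
  obtain ⟨W, hW⟩ := exists_eq_mul_conjTranspose_of_posSemidef hM
  obtain ⟨Q, hQ, hWQ⟩ : ∃ Q ∈ unitaryGroup (Fin 2 × Fin 2) ℂ,
      ∀ k, (W (0, 1) ᵥ* Q) k * (W (1, 0) ᵥ* Q) k = 0 := by
    refine exists_unitary_vecMul_mul_vecMul_eq_zero ?_
    rwa [hW] at hM_offdiag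
  obtain rfl : M = W * Q * (W * Q)ᴴ := by
    rw [conjTranspose_mul, Matrix.mul_assoc, ← Matrix.mul_assoc Q, ← star_eq_conjTranspose Q,
      mem_unitaryGroup_iff.mp hQ, Matrix.one_mul, hW]
  calc 2 * lam i - ∑ j, lam j
      ≤ ∑ k, ‖tangleMatrix (W * Q) k k‖ := two_mul_sub_sum_le_sum_norm_tangleMatrix h i
    _ = 2 * ∑ k, ‖(W * Q) (0, 0) k * (W * Q) (1, 1) k‖ := by
        rw [Finset.mul_sum]
        refine Finset.sum_congr rfl fun k _ => ?_
        have hk : (W * Q) (0, 1) k * (W * Q) (1, 0) k = 0 := hWQ k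
        rw [tangleMatrix_apply_self, hk, zero_sub, norm_mul, norm_neg, Complex.norm_ofNat]
    _ ≤ _ := by gcongr; exact sum_norm_mul_le_sqrt_mul_sqrt _ _ _

/-! ### Local filtering -/

lemma transpose_kronecker_mul_pauli_two_mul (P F : Matrix (Fin 2) (Fin 2) ℂ) :
    (P ⊗ₖ F)ᵀ * (pauli 2 ⊗ₖ pauli 2) * (P ⊗ₖ F) = (P.det * F.det) • (pauli 2 ⊗ₖ pauli 2) := by
  rw [← kroneckerMap_transpose, ← mul_kronecker_mul, ← mul_kronecker_mul,
    transpose_mul_pauli_two_mul, transpose_mul_pauli_two_mul, smul_kronecker, kronecker_smul,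
    smul_smul]

lemma charpoly_kronecker_conj_mul_spinFlip {ρ : Matrix (Fin 2 × Fin 2) (Fin 2 × Fin 2) ℂ}
    (hρ : ρ.IsHermitian) (P F : Matrix (Fin 2) (Fin 2) ℂ) :
    ((P ⊗ₖ F) * ρ * (P ⊗ₖ F)ᴴ * spinFlip ((P ⊗ₖ F) * ρ * (P ⊗ₖ F)ᴴ)).charpoly =
      (((‖P.det * F.det‖ : ℂ) ^ 2) • (ρ * spinFlip ρ)).charpoly := by
  have hR := transpose_kronecker_mul_pauli_two_mul P F
  set R : Matrix (Fin 2 × Fin 2) (Fin 2 × Fin 2) ℂ := P ⊗ₖ F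
  set S : Matrix (Fin 2 × Fin 2) (Fin 2 × Fin 2) ℂ := pauli 2 ⊗ₖ pauli 2
  set δ : ℂ := P.det * F.det
  have hR' : Rᴴ * S * Rᵀᴴ = star δ • S := by
    have hS : Sᴴ = S := isHermitian_pauli_kronecker_pauli 2 2
    have h := congrArg conjTranspose hR
    rwa [conjTranspose_mul, conjTranspose_mul, conjTranspose_smul, hS, ← Matrix.mul_assoc] at h
  rw [spinFlip_of_isHermitian hρ, spinFlip_of_isHermitian (isHermitian_mul_mul_conjTranspose R hρ)]
  calc (R * ρ * Rᴴ * (S * (R * ρ * Rᴴ)ᵀ * S)).charpoly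
      = (R * (ρ * (Rᴴ * S * Rᵀᴴ) * ρᵀ * Rᵀ * S)).charpoly := by
        rw [transpose_mul, transpose_mul]
        simp only [Matrix.mul_assoc]
        rfl
    _ = (ρ * (Rᴴ * S * Rᵀᴴ) * ρᵀ * (Rᵀ * S * R)).charpoly := by
        rw [charpoly_mul_comm]
        simp only [Matrix.mul_assoc]
    _ = (((‖δ‖ : ℂ) ^ 2) • (ρ * (S * ρᵀ * S))).charpoly := by
        rw [hR, hR', ← Complex.mul_conj']
        simp only [Matrix.mul_smul, Matrix.smul_mul, smul_smul, Matrix.mul_assoc, Complex.star_def]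

theorem IsConcurrenceSpectrum.kronecker_conj {ρ : Matrix (Fin 2 × Fin 2) (Fin 2 × Fin 2) ℂ}
    (hρ : ρ.IsHermitian) {lam : Fin 4 → ℝ} (h : IsConcurrenceSpectrum ρ lam)
    (P F : Matrix (Fin 2) (Fin 2) ℂ) :
    IsConcurrenceSpectrum ((P ⊗ₖ F) * ρ * (P ⊗ₖ F)ᴴ) (‖P.det * F.det‖ • lam) := by
  refine ⟨fun i => mul_nonneg (norm_nonneg _) (h.1 i), ?_⟩
  rw [charpoly_kronecker_conj_mul_spinFlip hρ, charpoly_smul_of_eq_prod h.2]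
  simp only [Pi.smul_apply, smul_eq_mul, Complex.ofReal_mul, mul_pow]

lemma norm_det_of_mem_unitaryGroup {n : Type*} [Fintype n] [DecidableEq n] {U : Matrix n n ℂ}
    (hU : U ∈ unitaryGroup n ℂ) : ‖U.det‖ = 1 :=
  CStarRing.norm_of_mem_unitary (det_of_mem_unitary hU)

lemma IsConcurrenceSpectrum.unitary_kronecker_conj
    {ρ : Matrix (Fin 2 × Fin 2) (Fin 2 × Fin 2) ℂ} (hρ : ρ.IsHermitian) {lam : Fin 4 → ℝ}
    (h : IsConcurrenceSpectrum ρ lam) {P F : Matrix (Fin 2) (Fin 2) ℂ}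
    (hP : P ∈ unitaryGroup (Fin 2) ℂ) (hF : F ∈ unitaryGroup (Fin 2) ℂ) :
    IsConcurrenceSpectrum ((P ⊗ₖ F) * ρ * (P ⊗ₖ F)ᴴ) lam := by
  simpa only [norm_mul, norm_det_of_mem_unitaryGroup hP, norm_det_of_mem_unitaryGroup hF, one_mul,
    one_smul] using h.kronecker_conj hρ P F

/-! ### Partial traces -/

section PartialTrace

variable {m n R : Type*}

/-- The partial trace over the left tensor factor, which gives Bob's marginal of a two-qubit
state. -/
def traceLeft [Fintype m] [AddCommMonoid R] (M : Matrix (m × n) (m × n) R) : Matrix n n R :=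
  of fun k l => ∑ i, M (i, k) (i, l)

/-- The partial trace over the right tensor factor, which gives Alice's marginal of a two-qubit
state. -/
def traceRight [Fintype n] [AddCommMonoid R] (M : Matrix (m × n) (m × n) R) : Matrix m m R :=
  of fun i j => ∑ k, M (i, k) (j, k)

lemma posSemidef_traceLeft [Fintype m] {M : Matrix (m × n) (m × n) ℂ} (hM : M.PosSemidef) :
    (traceLeft M).PosSemidef := by
  have h_sum : traceLeft M = ∑ i, M.submatrix (Prod.mk i) (Prod.mk i) := by
    ext k l
    simp [traceLeft, Matrix.sum_apply]
  rw [h_sum]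
  exact posSemidef_sum _ fun i _ => hM.submatrix _

lemma isHermitian_traceRight [Fintype n] {M : Matrix (m × n) (m × n) ℂ} (hM : M.IsHermitian) :
    (traceRight M).IsHermitian := by
  ext i j
  simp only [traceRight, conjTranspose_apply, of_apply, star_sum, hM.apply]

variable [Fintype m] [Fintype n]

lemma trace_traceLeft_mul [DecidableEq m] [CommSemiring R] (M : Matrix (m × n) (m × n) R)
    (B : Matrix n n R) : (traceLeft M * B).trace = (M * (1 ⊗ₖ B)).trace := by
  calc (traceLeft M * B).trace = ∑ k, ∑ l, ∑ i, M (i, k) (i, l) * B l k := by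
        simp only [traceLeft, trace, diag_apply, mul_apply, of_apply, Finset.sum_mul]
    _ = ∑ i, ∑ k, ∑ l, M (i, k) (i, l) * B l k := by
        rw [Finset.sum_comm_cycle, Finset.sum_comm]
    _ = _ := by
        simp [trace, mul_apply, Fintype.sum_prod_type, one_apply, Finset.sum_ite_irrel]

lemma trace_traceRight_mul [DecidableEq n] [CommSemiring R] (M : Matrix (m × n) (m × n) R)
    (A : Matrix m m R) : (traceRight M * A).trace = (M * (A ⊗ₖ 1)).trace := by
  calc (traceRight M * A).trace = ∑ i, ∑ j, ∑ k, M (i, k) (j, k) * A j i := by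
        simp only [traceRight, trace, diag_apply, mul_apply, of_apply, Finset.sum_mul]
    _ = ∑ i, ∑ k, ∑ j, M (i, k) (j, k) * A j i :=
        Finset.sum_congr rfl fun i _ => Finset.sum_comm
    _ = _ := by
        simp [trace, mul_apply, Fintype.sum_prod_type, one_apply]

variable [DecidableEq m] [CommSemiring R] [StarRing R]

lemma traceLeft_kronecker_conj {P : Matrix m m R} (hP : Pᴴ * P = 1) (F : Matrix n n R)
    (M : Matrix (m × n) (m × n) R) :
    traceLeft ((P ⊗ₖ F) * M * (P ⊗ₖ F)ᴴ) = F * traceLeft M * Fᴴ := by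
  refine Matrix.ext_iff_trace_mul_right.mpr fun B => ?_
  calc _ = (((P ⊗ₖ F) * M * (P ⊗ₖ F)ᴴ) * (1 ⊗ₖ B)).trace := trace_traceLeft_mul _ _
    _ = (M * ((P ⊗ₖ F)ᴴ * (1 ⊗ₖ B) * (P ⊗ₖ F))).trace := by
        rw [Matrix.mul_assoc, Matrix.mul_assoc, trace_mul_comm]
        simp only [Matrix.mul_assoc]
    _ = (M * (1 ⊗ₖ (Fᴴ * B * F))).trace := by
        rw [conjTranspose_kronecker, ← mul_kronecker_mul, ← mul_kronecker_mul, Matrix.mul_one, hP]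
    _ = _ := by
        rw [← trace_traceLeft_mul, ← Matrix.mul_assoc, trace_mul_comm]
        simp only [Matrix.mul_assoc]

lemma traceRight_kronecker_conj (P : Matrix m m R) (F : Matrix n n R)
    (M : Matrix (m × n) (m × n) R) :
    traceRight ((P ⊗ₖ F) * M * (P ⊗ₖ F)ᴴ) = P * traceRight (M * (1 ⊗ₖ (Fᴴ * F))) * Pᴴ := by
  classical
  refine Matrix.ext_iff_trace_mul_right.mpr fun A => ?_
  calc _ = (((P ⊗ₖ F) * M * (P ⊗ₖ F)ᴴ) * (A ⊗ₖ 1)).trace := trace_traceRight_mul _ _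
    _ = (M * ((P ⊗ₖ F)ᴴ * (A ⊗ₖ 1) * (P ⊗ₖ F))).trace := by
        rw [Matrix.mul_assoc, Matrix.mul_assoc, trace_mul_comm]
        simp only [Matrix.mul_assoc]
    _ = (M * (1 ⊗ₖ (Fᴴ * F)) * ((Pᴴ * A * P) ⊗ₖ 1)).trace := by
        rw [conjTranspose_kronecker, ← mul_kronecker_mul, ← mul_kronecker_mul, Matrix.mul_one,
          Matrix.mul_assoc M, ← mul_kronecker_mul, Matrix.one_mul, Matrix.mul_one]
    _ = _ := by
        rw [← trace_traceRight_mul, ← Matrix.mul_assoc, trace_mul_comm]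
        simp only [Matrix.mul_assoc]

end PartialTrace

lemma re_apply_self_le_re_traceLeft {m n : Type*} [Fintype m] {M : Matrix (m × n) (m × n) ℂ}
    (hM : M.PosSemidef) (i : m) (k : n) : (M (i, k) (i, k)).re ≤ (traceLeft M k k).re := by
  rw [traceLeft, of_apply, Complex.re_sum]
  exact Finset.single_le_sum (f := fun j => (M (j, k) (j, k)).re)
    (fun j _ => (Complex.nonneg_iff.mp hM.diag_nonneg).1) (Finset.mem_univ i)

lemma re_apply_self_le_re_traceRight {m n : Type*} [Fintype n] {M : Matrix (m × n) (m × n) ℂ}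
    (hM : M.PosSemidef) (i : m) (k : n) : (M (i, k) (i, k)).re ≤ (traceRight M i i).re := by
  rw [traceRight, of_apply, Complex.re_sum]
  exact Finset.single_le_sum (f := fun l => (M (i, l) (i, l)).re)
    (fun l _ => (Complex.nonneg_iff.mp hM.diag_nonneg).1) (Finset.mem_univ k)

lemma one_kronecker_conj_submatrix {m n R : Type*} [Fintype m] [DecidableEq m] [Fintype n]
    [CommSemiring R] [StarRing R] (S : Matrix n n R) (M : Matrix (m × n) (m × n) R) (i j : m) :
    ((1 ⊗ₖ S) * M * (1 ⊗ₖ S)ᴴ).submatrix (Prod.mk i) (Prod.mk j) =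
      S * M.submatrix (Prod.mk i) (Prod.mk j) * Sᴴ := by
  ext k l
  simp [mul_apply, Fintype.sum_prod_type, one_apply, apply_ite star, Finset.sum_ite_irrel]

lemma two_mul_sub_sum_le_two_mul_sqrt_of_apply_eq_zero
    {M : Matrix (Fin 2 × Fin 2) (Fin 2 × Fin 2) ℂ} (hM : M.PosSemidef)
    (hM_offdiag : M (0, 1) (1, 0) = 0) (hM_left : traceLeft M = 1) {lam : Fin 4 → ℝ}
    (h : IsConcurrenceSpectrum M lam) (i : Fin 4) (k : Fin 2) :
    2 * lam i - ∑ j, lam j ≤ 2 * √(traceRight M k k).re := by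
  refine (two_mul_sub_sum_le_of_apply_eq_zero hM hM_offdiag h i).trans ?_
  have h_left (i k : Fin 2) : √(M (i, k) (i, k)).re ≤ 1 := by
    simpa [hM_left] using re_apply_self_le_re_traceLeft hM i k
  have h_right (i k : Fin 2) : √(M (i, k) (i, k)).re ≤ √(traceRight M i i).re :=
    Real.sqrt_le_sqrt (re_apply_self_le_re_traceRight hM i k)
  gcongr
  fin_cases k
  · exact (mul_le_of_le_one_right (Real.sqrt_nonneg _) (h_left 1 1)).trans (h_right 0 0)
  · exact (mul_le_of_le_one_left (Real.sqrt_nonneg _) (h_left 0 0)).trans (h_right 1 1)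

lemma two_mul_sub_sum_le_two_mul_sqrt_traceRight
    {M : Matrix (Fin 2 × Fin 2) (Fin 2 × Fin 2) ℂ} (hM : M.PosSemidef) (hM_left : traceLeft M = 1)
    {lam : Fin 4 → ℝ} (h : IsConcurrenceSpectrum M lam) (i : Fin 4) (k : Fin 2) :
    2 * lam i - ∑ j, lam j ≤ 2 * √(traceRight M k k).re := by
  obtain ⟨S, hS, hS_offdiag⟩ :=
    exists_unitary_conj_apply_one_zero_eq_zero (M.submatrix (Prod.mk 0) (Prod.mk 1))
  have hS₁ : Sᴴ * S = 1 := mem_unitaryGroup_iff'.mp hS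
  have hS₂ : S * Sᴴ = 1 := mem_unitaryGroup_iff.mp hS
  have h_right : traceRight ((1 ⊗ₖ S) * M * (1 ⊗ₖ S)ᴴ) = traceRight M := by
    rw [traceRight_kronecker_conj, hS₁, one_kronecker_one, Matrix.mul_one, conjTranspose_one,
      Matrix.one_mul, Matrix.mul_one]
  rw [← h_right]
  refine two_mul_sub_sum_le_two_mul_sqrt_of_apply_eq_zero (hM.mul_mul_conjTranspose_same _) ?_ ?_
    (h.unitary_kronecker_conj hM.1 (one_mem _) hS) i k
  · rwa [← one_kronecker_conj_submatrix] at hS_offdiag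
  · rw [traceLeft_kronecker_conj (by simp), hM_left, Matrix.mul_one, hS₂]

theorem two_mul_sub_sum_le_two_mul_sqrt_eigenvalues
    {M : Matrix (Fin 2 × Fin 2) (Fin 2 × Fin 2) ℂ} (hM : M.PosSemidef) (hM_left : traceLeft M = 1)
    (hα : (traceRight M).IsHermitian) {lam : Fin 4 → ℝ} (h : IsConcurrenceSpectrum M lam)
    (i : Fin 4) (k : Fin 2) :
    2 * lam i - ∑ j, lam j ≤ 2 * √(hα.eigenvalues k) := by
  let U : Matrix (Fin 2) (Fin 2) ℂ := (star hα.eigenvectorUnitary).1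
  have hU : U ∈ unitaryGroup (Fin 2) ℂ := (star hα.eigenvectorUnitary).2
  have h_left : traceLeft ((U ⊗ₖ 1) * M * (U ⊗ₖ 1)ᴴ) = 1 := by
    rw [traceLeft_kronecker_conj (mem_unitaryGroup_iff'.mp hU), hM_left, conjTranspose_one,
      Matrix.one_mul, Matrix.one_mul]
  have h_right : traceRight ((U ⊗ₖ 1) * M * (U ⊗ₖ 1)ᴴ) =
      diagonal (fun k => (hα.eigenvalues k : ℂ)) := by
    rw [traceRight_kronecker_conj, conjTranspose_one, Matrix.mul_one, one_kronecker_one,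
      Matrix.mul_one]
    exact (Unitary.conjStarAlgAut_apply _ _).symm.trans hα.conjStarAlgAut_star_eigenvectorUnitary
  simpa only [h_right, diagonal_apply_eq, Complex.ofReal_re] using
    two_mul_sub_sum_le_two_mul_sqrt_traceRight (hM.mul_mul_conjTranspose_same _) h_left
      (h.unitary_kronecker_conj hM.1 hU (one_mem _)) i k

/-! ### Bloch vectors -/

/-- The qubit operator `1 + v · σ`, twice the state with Bloch vector `v`. -/
def blochMatrix (v : Fin 3 → ℝ) : Matrix (Fin 2) (Fin 2) ℂ :=
  1 + ∑ i, (v i : ℂ) • pauli i.succ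

lemma norm3_sq (v : Fin 3 → ℝ) : norm3 v ^ 2 = ∑ i, v i ^ 2 :=
  Real.sq_sqrt (by positivity)

lemma blochMatrix_eq (v : Fin 3 → ℝ) :
    blochMatrix v = !![1 + (v 2 : ℂ), v 0 - v 1 * Complex.I; v 0 + v 1 * Complex.I, 1 - v 2] := by
  ext i j
  fin_cases i <;> fin_cases j <;>
    simp [blochMatrix, Fin.sum_univ_three, pauli, sub_eq_add_neg]

lemma trace_blochMatrix (v : Fin 3 → ℝ) : (blochMatrix v).trace = 2 := by
  rw [blochMatrix_eq, trace_fin_two_of]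
  ring

lemma det_blochMatrix (v : Fin 3 → ℝ) : (blochMatrix v).det = ((1 - norm3 v ^ 2 : ℝ) : ℂ) := by
  rw [blochMatrix_eq, det_fin_two_of, norm3_sq, Fin.sum_univ_three]
  push_cast
  linear_combination (v 1 : ℂ) ^ 2 * Complex.I_sq

lemma blochMatrix_neg_mul_blochMatrix (v : Fin 3 → ℝ) :
    blochMatrix (-v) * blochMatrix v = ((1 - norm3 v ^ 2 : ℝ) : ℂ) • 1 := by
  have h_adj : blochMatrix (-v) = (blochMatrix v).adjugate := by
    rw [blochMatrix_eq, blochMatrix_eq, adjugate_fin_two_of]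
    ext i j
    fin_cases i <;> fin_cases j <;> simp [sub_eq_add_neg, add_comm]
  rw [h_adj, adjugate_mul, det_blochMatrix]

lemma eq_blochMatrix_of_trace_mul_pauli {A : Matrix (Fin 2) (Fin 2) ℂ} {v : Fin 3 → ℝ}
    (h_trace : A.trace = 2) (h_pauli : ∀ i, (A * pauli i.succ).trace = 2 * v i) :
    A = blochMatrix v := by
  have h₀ : A 0 0 + A 1 1 = 2 := by rwa [trace_fin_two] at h_trace
  have h₁ : A 0 1 + A 1 0 = 2 * v 0 := by
    simpa [pauli, trace_fin_two, mul_apply] using h_pauli 0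
  have h₂ : A 0 1 * Complex.I - A 1 0 * Complex.I = 2 * v 1 := by
    simpa [pauli, trace_fin_two, mul_apply, sub_eq_add_neg] using h_pauli 1
  have h₃ : A 0 0 - A 1 1 = 2 * v 2 := by
    simpa [pauli, trace_fin_two, mul_apply, sub_eq_add_neg] using h_pauli 2
  have h₀₀ : A 0 0 = 1 + v 2 := by linear_combination (h₀ + h₃) / 2
  have h₀₁ : A 0 1 = v 0 - v 1 * Complex.I := by
    linear_combination (h₁ - Complex.I * h₂) / 2 + (A 0 1 - A 1 0) / 2 * Complex.I_sq
  have h₁₀ : A 1 0 = v 0 + v 1 * Complex.I := by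
    linear_combination (h₁ + Complex.I * h₂) / 2 + (A 1 0 - A 0 1) / 2 * Complex.I_sq
  have h₁₁ : A 1 1 = 1 - v 2 := by linear_combination (h₀ - h₃) / 2
  rw [eta_fin_two A, h₀₀, h₀₁, h₁₀, h₁₁, blochMatrix_eq]

lemma exists_eigenvalues_eq_one_sub_norm3 {A : Matrix (Fin 2) (Fin 2) ℂ} (hA : A.IsHermitian)
    {v : Fin 3 → ℝ} (hAv : A = blochMatrix v) : ∃ k, hA.eigenvalues k = 1 - norm3 v := by
  subst hAv
  have h_trace : hA.eigenvalues 0 + hA.eigenvalues 1 = 2 := by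
    have h := hA.trace_eq_sum_eigenvalues
    rw [trace_blochMatrix, Fin.sum_univ_two] at h
    exact Complex.ofReal_injective ((Complex.ofReal_add _ _).trans h.symm)
  have h_det : hA.eigenvalues 0 * hA.eigenvalues 1 = 1 - norm3 v ^ 2 := by
    have h := hA.det_eq_prod_eigenvalues
    rw [det_blochMatrix, Fin.prod_univ_two] at h
    exact Complex.ofReal_injective ((Complex.ofReal_mul _ _).trans h.symm)
  have h_root : (hA.eigenvalues 0 - (1 - norm3 v)) * (hA.eigenvalues 1 - (1 - norm3 v)) = 0 := by
    linear_combination h_det - (1 - norm3 v) * h_trace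
  rcases mul_eq_zero.mp h_root with h | h
  exacts [⟨0, sub_eq_zero.mp h⟩, ⟨1, sub_eq_zero.mp h⟩]

theorem two_mul_sub_sum_le_two_mul_sqrt_one_sub_norm3
    {M : Matrix (Fin 2 × Fin 2) (Fin 2 × Fin 2) ℂ} (hM : M.PosSemidef) (hM_left : traceLeft M = 1)
    {c : Fin 3 → ℝ} (hM_right : traceRight M = blochMatrix c) {lam : Fin 4 → ℝ}
    (h : IsConcurrenceSpectrum M lam) (i : Fin 4) :
    2 * lam i - ∑ j, lam j ≤ 2 * √(1 - norm3 c) := by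
  obtain ⟨k, hk⟩ :=
    exists_eigenvalues_eq_one_sub_norm3 (isHermitian_traceRight hM.1) hM_right
  rw [← hk]
  exact two_mul_sub_sum_le_two_mul_sqrt_eigenvalues hM hM_left _ h i k

theorem norm_det_mul_two_mul_sub_sum_le {ρ : Matrix (Fin 2 × Fin 2) (Fin 2 × Fin 2) ℂ}
    (hρ : ρ.PosSemidef) {F : Matrix (Fin 2) (Fin 2) ℂ} (hF : F * traceLeft ρ * Fᴴ = 1)
    {c : Fin 3 → ℝ} (hc : traceRight (ρ * (1 ⊗ₖ (Fᴴ * F))) = blochMatrix c) {lam : Fin 4 → ℝ}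
    (h : IsConcurrenceSpectrum ρ lam) (i : Fin 4) :
    ‖F.det‖ * (2 * lam i - ∑ j, lam j) ≤ 2 * √(1 - norm3 c) := by
  have h_left : traceLeft ((1 ⊗ₖ F) * ρ * (1 ⊗ₖ F)ᴴ) = 1 := by
    rw [traceLeft_kronecker_conj (by simp), hF]
  have h_right : traceRight ((1 ⊗ₖ F) * ρ * (1 ⊗ₖ F)ᴴ) = blochMatrix c := by
    rw [traceRight_kronecker_conj, hc, Matrix.one_mul, conjTranspose_one, Matrix.mul_one]
  have h_bound := two_mul_sub_sum_le_two_mul_sqrt_one_sub_norm3 (hρ.mul_mul_conjTranspose_same _)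
    h_left h_right (h.kronecker_conj hρ.1 1 F) i
  simpa only [det_one, one_mul, Pi.smul_apply, smul_eq_mul, ← Finset.mul_sum, mul_left_comm,
    ← mul_sub] using h_bound

lemma exists_mul_mul_conjTranspose_eq_one {n : Type*} [Fintype n] [DecidableEq n]
    {β : Matrix n n ℂ} (hβ : β.PosSemidef) (h_det : β.det ≠ 0) :
    ∃ F : Matrix n n ℂ, F * β * Fᴴ = 1 := by
  obtain ⟨V, rfl⟩ := exists_eq_mul_conjTranspose_of_posSemidef hβ
  rw [det_mul] at h_det
  have hV : IsUnit V.det := (left_ne_zero_of_mul h_det).isUnit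
  refine ⟨V⁻¹, ?_⟩
  rw [← Matrix.mul_assoc, nonsing_inv_mul V hV, Matrix.one_mul, ← conjTranspose_mul,
    nonsing_inv_mul V hV, conjTranspose_one]

section Theta

variable {ρ : Matrix (Fin 2 × Fin 2) (Fin 2 × Fin 2) ℂ}

lemma ofReal_Theta_apply (hρ : ρ.IsHermitian) (μ ν : Fin 4) :
    (Theta ρ μ ν : ℂ) = (ρ * (pauli μ ⊗ₖ pauli ν)).trace := by
  refine Complex.conj_eq_iff_re.mp ?_
  rw [← Complex.star_def, ← trace_conjTranspose, conjTranspose_mul, hρ.eq,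
    isHermitian_pauli_kronecker_pauli, trace_mul_comm]

lemma two_smul_traceLeft (hρ : ρ.IsHermitian) (htr : ρ.trace = 1) :
    (2 : ℂ) • traceLeft ρ = blochMatrix (fun j => Theta ρ 0 j.succ) := by
  refine eq_blochMatrix_of_trace_mul_pauli ?_ fun j => ?_
  · rw [← Matrix.mul_one (traceLeft ρ), trace_smul, trace_traceLeft_mul, one_kronecker_one,
      Matrix.mul_one, htr, smul_eq_mul, mul_one]
  · rw [Matrix.smul_mul, trace_smul, trace_traceLeft_mul, ofReal_Theta_apply hρ, pauli_zero,
      smul_eq_mul]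

lemma trace_mul_pauli_kronecker_blochMatrix_neg (hρ : ρ.IsHermitian) (μ : Fin 4)
    (v : Fin 3 → ℝ) :
    (ρ * (pauli μ ⊗ₖ blochMatrix (-v))).trace =
      ((Theta ρ μ 0 - ∑ j, Theta ρ μ j.succ * v j : ℝ) : ℂ) := by
  push_cast
  simp only [ofReal_Theta_apply hρ, blochMatrix, Fin.sum_univ_three, pauli_zero, kronecker_add,
    kronecker_smul, Matrix.mul_add, Matrix.mul_smul, trace_add, trace_smul, smul_eq_mul,
    Pi.neg_apply, Complex.ofReal_neg]
  ring

lemma trace_traceRight_mul_pauli (hρ : ρ.IsHermitian) (r : ℝ) (v : Fin 3 → ℝ) (μ : Fin 4) :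
    (traceRight (ρ * (1 ⊗ₖ ((r : ℂ) • blochMatrix (-v)))) * pauli μ).trace =
      ((r * (Theta ρ μ 0 - ∑ j, Theta ρ μ j.succ * v j) : ℝ) : ℂ) := by
  rw [trace_traceRight_mul, Matrix.mul_assoc, ← mul_kronecker_mul, Matrix.one_mul, Matrix.mul_one,
    kronecker_smul, Matrix.mul_smul, trace_smul, trace_mul_pauli_kronecker_blochMatrix_neg hρ,
    smul_eq_mul, Complex.ofReal_mul]

lemma traceRight_mul_one_kronecker_blochMatrix_neg (hρ : ρ.IsHermitian) (htr : ρ.trace = 1)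
    {b c : Fin 3 → ℝ} (hb : ∀ j, b j = Theta ρ 0 j.succ) (hb_ne : 1 - norm3 b ^ 2 ≠ 0)
    (hc : ∀ i, c i = (1 - norm3 b ^ 2)⁻¹ * (Theta ρ i.succ 0 - ∑ j, Theta ρ i.succ j.succ * b j)) :
    traceRight (ρ * (1 ⊗ₖ (((2 / (1 - norm3 b ^ 2) : ℝ) : ℂ) • blochMatrix (-b)))) =
      blochMatrix c := by
  refine eq_blochMatrix_of_trace_mul_pauli ?_ fun i => ?_
  · have h_Theta : Theta ρ 0 0 - ∑ j, Theta ρ 0 (Fin.succ j) * b j = 1 - norm3 b ^ 2 := by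
      simp only [norm3_sq, ← hb, ← pow_two]
      simp [Theta, pauli_zero, htr]
    have h := trace_traceRight_mul_pauli hρ (2 / (1 - norm3 b ^ 2)) b 0
    rwa [pauli_zero, Matrix.mul_one, h_Theta, div_mul_cancel₀ _ hb_ne, Complex.ofReal_ofNat] at h
  · rw [trace_traceRight_mul_pauli hρ, hc]
    push_cast
    ring

end Theta

lemma norm_det_sq_mul_norm_det_eq_one {n : Type*} [Fintype n] [DecidableEq n] {F β : Matrix n n ℂ}
    (hF : F * β * Fᴴ = 1) : ‖F.det‖ ^ 2 * ‖β.det‖ = 1 := by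
  have h := congrArg (fun A => ‖A.det‖) hF
  simp only [det_mul, det_conjTranspose, norm_mul, norm_star, det_one, norm_one] at h
  linear_combination h

lemma exists_filter_of_two_smul_eq_blochMatrix {β : Matrix (Fin 2) (Fin 2) ℂ} (hβ : β.PosSemidef)
    {b : Fin 3 → ℝ} (hβb : (2 : ℂ) • β = blochMatrix b) (hb : 0 < 1 - norm3 b ^ 2) :
    ∃ F : Matrix (Fin 2) (Fin 2) ℂ, F * β * Fᴴ = 1 ∧
      Fᴴ * F = ((2 / (1 - norm3 b ^ 2) : ℝ) : ℂ) • blochMatrix (-b) ∧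
      ‖F.det‖ * √(1 - norm3 b ^ 2) = 2 := by
  have h_det : 4 * ‖β.det‖ = 1 - norm3 b ^ 2 := by
    have h := congrArg (fun A => ‖A.det‖) hβb
    simp only [det_smul, det_blochMatrix, norm_mul, norm_pow, Complex.norm_ofNat,
      Complex.norm_real, Real.norm_of_nonneg hb.le, Fintype.card_fin] at h
    linear_combination h
  obtain ⟨F, hF⟩ := exists_mul_mul_conjTranspose_eq_one hβ <| norm_pos_iff.mp <| by linarith
  refine ⟨F, hF, ?_, ?_⟩
  · have h_inv : ((2 / (1 - norm3 b ^ 2) : ℝ) : ℂ) • blochMatrix (-b) * β = 1 := by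
      have h := blochMatrix_neg_mul_blochMatrix b
      rw [← hβb, Matrix.mul_smul] at h
      rw [Matrix.smul_mul, div_eq_inv_mul, Complex.ofReal_mul, mul_smul, Complex.ofReal_ofNat, h,
        smul_smul, ← Complex.ofReal_mul, inv_mul_cancel₀ hb.ne', Complex.ofReal_one, one_smul]
    have h_inv' : β * (Fᴴ * F) = 1 := by
      rw [← Matrix.mul_assoc, mul_eq_one_comm, ← Matrix.mul_assoc, hF]
    exact (left_inv_eq_right_inv h_inv h_inv').symm
  · have h_sq : (‖F.det‖ * √(1 - norm3 b ^ 2)) ^ 2 = 2 ^ 2 := by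
      rw [mul_pow, Real.sq_sqrt hb.le, ← h_det]
      linear_combination 4 * norm_det_sq_mul_norm_det_eq_one hF
    exact (pow_left_inj₀ (by positivity) zero_le_two two_ne_zero).mp h_sq

/-- Concurrence of any two-qubit state whose steering ellipsoid has centre of norm `c`
is at most `√(1−c)`: `λ₁ − λ₂ − λ₃ − λ₄ ≤ √(1 − ‖b‖²)·√(1 − ‖c_A‖)`. -/
theorem stmt13 (ρ : Matrix (Fin 2 × Fin 2) (Fin 2 × Fin 2) ℂ)
    (hpsd : ρ.PosSemidef) (htr : ρ.trace = 1)
    (b : Fin 3 → ℝ) (hb : ∀ j, b j = Theta ρ 0 j.succ)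
    (hb1 : norm3 b < 1)
    (γb : ℝ) (hγb : γb = 1 / Real.sqrt (1 - norm3 b ^ 2))
    (cA : Fin 3 → ℝ)
    (hcA : ∀ i, cA i = γb ^ 2 * (Theta ρ i.succ 0 - ∑ j, Theta ρ i.succ j.succ * b j))
    (lam : Fin 4 → ℝ)
    (h01 : lam 1 ≤ lam 0) (h12 : lam 2 ≤ lam 1) (h23 : lam 3 ≤ lam 2) (h3 : 0 ≤ lam 3)
    (hchar : (ρ * spinFlip ρ).charpoly = ∏ i : Fin 4, (X - C ((lam i : ℂ) ^ 2))) :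
    lam 0 - lam 1 - lam 2 - lam 3
      ≤ Real.sqrt (1 - norm3 b ^ 2) * Real.sqrt (1 - norm3 cA) := by
  have hN : 0 < 1 - norm3 b ^ 2 := sub_pos.mpr (pow_lt_one₀ (Real.sqrt_nonneg _) hb1 two_ne_zero)
  have hγ : γb ^ 2 = (1 - norm3 b ^ 2)⁻¹ := by
    rw [hγb, div_pow, one_pow, Real.sq_sqrt hN.le, one_div]
  have h_spec : IsConcurrenceSpectrum ρ lam :=
    ⟨by intro i; fin_cases i <;> dsimp <;> linarith, hchar⟩
  have h_bob : (2 : ℂ) • traceLeft ρ = blochMatrix b := by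
    rw [two_smul_traceLeft hpsd.1 htr, ← funext hb]
  obtain ⟨F, hF, hFF, hF_det⟩ :=
    exists_filter_of_two_smul_eq_blochMatrix (posSemidef_traceLeft hpsd) h_bob hN
  have h_alice : traceRight (ρ * (1 ⊗ₖ (Fᴴ * F))) = blochMatrix cA := by
    rw [hFF, traceRight_mul_one_kronecker_blochMatrix_neg hpsd.1 htr hb hN.ne' (hγ ▸ hcA)]
  calc lam 0 - lam 1 - lam 2 - lam 3
      = √(1 - norm3 b ^ 2) / 2 * (‖F.det‖ * (2 * lam 0 - ∑ j, lam j)) := by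
        rw [Fin.sum_univ_four]
        linear_combination (-(lam 0 - lam 1 - lam 2 - lam 3) / 2) * hF_det
    _ ≤ √(1 - norm3 b ^ 2) / 2 * (2 * √(1 - norm3 cA)) :=
        mul_le_mul_of_nonneg_left (norm_det_mul_two_mul_sub_sum_le hpsd hF h_alice h_spec 0)
          (by positivity)
    _ = _ := by ring
end
end

section
/- Let 0 ≤ c ≤ 1 and let φ ∈ ℂ²⊗ℂ²⊗ℂ² be the unit vector φ = (1/√2)(√c·|001⟩ + |010⟩ + √(1−c)·|100⟩), with qubits ordered Alice, Bob, Charlie. Then: (i) the reduced state of |φ⟩⟨φ| on qubits (A,B) equals ρ̃ᵐᵃˣ_c; (ii) the reduced state on qubits (C,B), i.e. the matrix with entries M_{(γ,b),(γ',b')} = Σ_a φ_{a b γ}·conj(φ_{a b' γ'}), equals ρ̃ᵐᵃˣ_{1−c}. Hence both ellipsoids steered by Bob are of maximal volume and their centres obey c_{A|B} + c_{C|B} = c + (1−c) = 1. -/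
open Matrix Kronecker Polynomial
open scoped ComplexOrder

noncomputable section

/-- The vector `|ψ_c⟩ = (|01⟩ + √(1−c)|10⟩)/√(2−c)` in the computational basis. -/
def psiC (c : ℝ) : Fin 2 × Fin 2 → ℂ := fun p =>
  if p = (0, 1) then ((1 : ℝ) / Real.sqrt (2 - c) : ℝ)
  else if p = (1, 0) then (Real.sqrt (1 - c) / Real.sqrt (2 - c) : ℝ)
  else 0

/-- The vector `|00⟩` in the computational basis. -/
def ket00 : Fin 2 × Fin 2 → ℂ := fun p => if p = (0, 0) then 1 else 0

/-- The maximal-volume state `ρ̃ᵐᵃˣ_c = (1 − c/2)|ψ_c⟩⟨ψ_c| + (c/2)|00⟩⟨00|`. -/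
def rhoMax (c : ℝ) : Matrix (Fin 2 × Fin 2) (Fin 2 × Fin 2) ℂ :=
  ((1 - c / 2 : ℝ) : ℂ) • Matrix.vecMulVec (psiC c) (star (psiC c))
  + ((c / 2 : ℝ) : ℂ) • Matrix.vecMulVec ket00 (star ket00)

/-- The purification `φ = (1/√2)(√c|001⟩ + |010⟩ + √(1−c)|100⟩)` (qubits ordered
Alice, Bob, Charlie). -/
def phiTri (c : ℝ) : Fin 2 → Fin 2 → Fin 2 → ℂ := fun a b γ =>
  if a = 0 ∧ b = 0 ∧ γ = 1 then (Real.sqrt c / Real.sqrt 2 : ℝ)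
  else if a = 0 ∧ b = 1 ∧ γ = 0 then ((1 : ℝ) / Real.sqrt 2 : ℝ)
  else if a = 1 ∧ b = 0 ∧ γ = 0 then (Real.sqrt (1 - c) / Real.sqrt 2 : ℝ)
  else 0

/-! Splitting off Charlie's qubit gives `φ = √(1 - c/2) |ψ_c⟩|0⟩ + √(c/2) |00⟩|1⟩`, so `φ` purifies
the ensemble defining `ρ̃ᵐᵃˣ_c`, which is (i). Exchanging Alice and Charlie in `φ` amounts to
exchanging `c` and `1 - c`, so (ii) is (i) at `1 - c`. -/

section ReducedState

variable {ι κ A : Type*} [Fintype κ] [CommSemiring A] [StarRing A]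

/-- The reduced state on the subsystem `ι` of the pure state with components `φ p k`, where `k`
runs over the basis of the subsystem traced out. No normalization of `φ` is imposed. -/
def reducedState (φ : ι → κ → A) : Matrix ι ι A :=
  Matrix.of fun p q => ∑ k, φ p k * starRingEnd A (φ q k)

theorem reducedState_sqrt_smul [Algebra ℝ A] [StarModule ℝ A] {w : κ → ℝ} (hw : ∀ k, 0 ≤ w k)
    (v : κ → ι → A) :
    reducedState (fun p k => √(w k) • v k p) = ∑ k, w k • vecMulVec (v k) (star (v k)) := by
  ext p q
  simp only [reducedState, of_apply, Matrix.sum_apply, Matrix.smul_apply, vecMulVec_apply,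
    Pi.star_apply, starRingEnd_apply, star_smul, star_trivial, smul_mul_smul_comm,
    Real.mul_self_sqrt (hw _)]

end ReducedState

theorem sqrt_smul_psiC_apply {c : ℝ} (hc : c < 2) (a b : Fin 2) :
    √(1 - c / 2) • psiC c (a, b) = phiTri c a b 0 := by
  have sqrt_weight : √(1 - c / 2) = √(2 - c) / √2 := by
    rw [← Real.sqrt_div' _ zero_le_two]
    congr 1
    ring
  have sqrt_ne_zero : √(2 - c) ≠ 0 := (Real.sqrt_pos.mpr (sub_pos.mpr hc)).ne'
  have rescale (x : ℝ) : √(1 - c / 2) • ((x / √(2 - c) : ℝ) : ℂ) = ((x / √2 : ℝ) : ℂ) := by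
    rw [Complex.real_smul, ← Complex.ofReal_mul, sqrt_weight]
    congr 1
    field_simp
  fin_cases a <;> fin_cases b <;>
    simp [psiC, phiTri, rescale, -Complex.real_smul, -Complex.ofReal_div, -one_div]

theorem sqrt_smul_ket00_apply (c : ℝ) (a b : Fin 2) :
    √(c / 2) • ket00 (a, b) = phiTri c a b 1 := by
  fin_cases a <;> fin_cases b <;> simp [ket00, phiTri]

theorem reducedState_phiTri {c : ℝ} (hc₀ : 0 ≤ c) (hc₂ : c < 2) :
    reducedState (fun p : Fin 2 × Fin 2 => phiTri c p.1 p.2) = rhoMax c := by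
  have weight_nonneg : ∀ γ, 0 ≤ ![1 - c / 2, c / 2] γ :=
    Fin.forall_fin_two.mpr ⟨show 0 ≤ 1 - c / 2 by linarith, show 0 ≤ c / 2 by linarith⟩
  have phiTri_eq (p : Fin 2 × Fin 2) (γ : Fin 2) :
      phiTri c p.1 p.2 γ = √(![1 - c / 2, c / 2] γ) • ![psiC c, ket00] γ p := by
    fin_cases γ
    · exact (sqrt_smul_psiC_apply hc₂ p.1 p.2).symm
    · exact (sqrt_smul_ket00_apply c p.1 p.2).symm
  calc reducedState (fun p : Fin 2 × Fin 2 => phiTri c p.1 p.2)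
      = reducedState fun p γ => √(![1 - c / 2, c / 2] γ) • ![psiC c, ket00] γ p :=
        congrArg reducedState (funext₂ phiTri_eq)
    _ = ∑ γ, ![1 - c / 2, c / 2] γ •
          vecMulVec (![psiC c, ket00] γ) (star (![psiC c, ket00] γ)) :=
        reducedState_sqrt_smul weight_nonneg _
    _ = rhoMax c := by
        simp only [Fin.sum_univ_two, cons_val_zero, cons_val_one, rhoMax, Complex.coe_smul]

theorem phiTri_one_sub (c : ℝ) (a b γ : Fin 2) : phiTri (1 - c) a b γ = phiTri c γ b a := by
  fin_cases a <;> fin_cases b <;> fin_cases γ <;> simp [phiTri]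

/-- Both ellipsoids steered by Bob in the purification of a maximal-volume state are
maximal volume: the (A,B) reduced state is `ρ̃ᵐᵃˣ_c`, the (C,B) reduced state is
`ρ̃ᵐᵃˣ_{1−c}`, and the centres obey `c + (1−c) = 1`. -/
theorem stmt16 (c : ℝ) (hc0 : 0 ≤ c) (hc1 : c ≤ 1) :
    (Matrix.of fun p q : Fin 2 × Fin 2 =>
        ∑ γ : Fin 2, phiTri c p.1 p.2 γ * (starRingEnd ℂ) (phiTri c q.1 q.2 γ))
      = rhoMax c
    ∧ (Matrix.of fun p q : Fin 2 × Fin 2 =>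
        ∑ a : Fin 2, phiTri c a p.2 p.1 * (starRingEnd ℂ) (phiTri c a q.2 q.1))
      = rhoMax (1 - c)
    ∧ c + (1 - c) = 1 := by
  refine ⟨reducedState_phiTri hc0 (by linarith), ?_, add_sub_cancel c 1⟩
  simp only [← phiTri_one_sub c]
  exact reducedState_phiTri (sub_nonneg.mpr hc1) (by linarith)
end
end

section
/- (CKW monogamy of concurrence.) Let ψ be a unit vector in ℂ²⊗ℂ²⊗ℂ² (qubits ordered Alice, Bob, Charlie). Then the squared concurrences of the two-qubit reduced states satisfy C(ρ_{AB})² + C(ρ_{BC})² ≤ 4·det ρ_B, where det ρ_B is real and nonnegative since ρ_B is a 2×2 positive semidefinite matrix. -/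
open Matrix Kronecker Polynomial
open scoped ComplexOrder

noncomputable section

/-!
As a vector of `ℂ² ⊗ ℂ²`, `σ₂` spans the antisymmetric subspace, so products of two of its entries
are, up to sign, the entries of the antisymmetrizer. Therefore the spin flip of a Hermitian `ρ` is
its universal state inversion `(tr ρ) 1 - ρ_A ⊗ 1 - 1 ⊗ ρ_B + ρ`, and
`tr (ρ ρ̂) = (tr ρ)² - tr ρ_A² - tr ρ_B² + tr ρ²`. This bounds `C(ρ)²`, because `C(ρ) ≤ λ₁` and
`∑ λᵢ² = tr (ρ ρ̂)`. For a pure state complementary subsystems have equal purity, so adding the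
traces for `AB` and `BC` cancels everything but `2 ((tr ρ_B)² - tr ρ_B²) = 4 det ρ_B`.
-/

section PartialTrace

variable {m n R : Type*}

/-- The partial trace over the first tensor factor. -/
def partialTraceLeft [Fintype m] [AddCommMonoid R] (ρ : Matrix (m × n) (m × n) R) :
    Matrix n n R :=
  of fun j j' => ∑ i, ρ (i, j) (i, j')

/-- The partial trace over the second tensor factor. -/
def partialTraceRight [Fintype n] [AddCommMonoid R] (ρ : Matrix (m × n) (m × n) R) :
    Matrix m m R :=
  of fun i i' => ∑ j, ρ (i, j) (i', j)

variable [Fintype m] [Fintype n]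

theorem trace_partialTraceLeft [AddCommMonoid R] (ρ : Matrix (m × n) (m × n) R) :
    trace (partialTraceLeft ρ) = trace ρ :=
  (Fintype.sum_prod_type_right (fun x => ρ x x)).symm

theorem trace_partialTraceRight [AddCommMonoid R] (ρ : Matrix (m × n) (m × n) R) :
    trace (partialTraceRight ρ) = trace ρ :=
  (Fintype.sum_prod_type (fun x => ρ x x)).symm

theorem trace_mul_kronecker_one [DecidableEq n] [NonAssocSemiring R]
    (ρ : Matrix (m × n) (m × n) R) (A : Matrix m m R) :
    trace (ρ * A ⊗ₖ (1 : Matrix n n R)) = trace (partialTraceRight ρ * A) := by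
  simp only [trace, diag_apply, mul_apply, Fintype.sum_prod_type, kroneckerMap_apply, one_apply,
    partialTraceRight, of_apply, mul_ite, mul_one, mul_zero, Finset.sum_ite_eq',
    Finset.mem_univ, if_true, Finset.sum_mul]
  exact Finset.sum_congr rfl fun i _ => Finset.sum_comm

theorem trace_mul_one_kronecker [DecidableEq m] [NonAssocSemiring R]
    (ρ : Matrix (m × n) (m × n) R) (B : Matrix n n R) :
    trace (ρ * (1 : Matrix m m R) ⊗ₖ B) = trace (partialTraceLeft ρ * B) := by
  simp only [trace, diag_apply, mul_apply, Fintype.sum_prod_type_right, kroneckerMap_apply,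
    one_apply, partialTraceLeft, of_apply, ite_mul, one_mul, zero_mul, mul_ite, mul_zero,
    Finset.sum_ite_eq', Finset.mem_univ, if_true, Finset.sum_mul]
  exact Finset.sum_congr rfl fun j _ => Finset.sum_comm

variable [DecidableEq m] [DecidableEq n] [CommRing R]

/-- The universal state inversion of a bipartite matrix, which extends the two-qubit spin flip of
Hermitian matrices to arbitrary dimensions; it sends `A ⊗ B` to `(tr A - A) ⊗ (tr B - B)`. -/
def stateInversion (ρ : Matrix (m × n) (m × n) R) : Matrix (m × n) (m × n) R :=
  trace ρ • 1 - partialTraceRight ρ ⊗ₖ 1 - 1 ⊗ₖ partialTraceLeft ρ + ρ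

-- Each factor in parentheses is an entry of the antisymmetrizer `1 - swap` of one subsystem.
theorem stateInversion_apply_eq_sum (ρ : Matrix (m × n) (m × n) R) (i k : m) (j l : n) :
    stateInversion ρ (i, j) (k, l) = ∑ s : m × n, ∑ r : m × n,
      ((1 : Matrix m m R) i k * (1 : Matrix m m R) r.1 s.1
          - (1 : Matrix m m R) i s.1 * (1 : Matrix m m R) r.1 k)
        * ((1 : Matrix n n R) j l * (1 : Matrix n n R) r.2 s.2
          - (1 : Matrix n n R) j s.2 * (1 : Matrix n n R) r.2 l) * ρ s r := by
  simp only [stateInversion, partialTraceLeft, partialTraceRight, trace, diag_apply, of_apply,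
    Matrix.add_apply, Matrix.sub_apply, Matrix.smul_apply, kroneckerMap_apply, one_apply,
    Prod.mk.injEq, ite_and, smul_eq_mul, mul_ite, ite_mul, mul_one, one_mul, mul_zero, zero_mul,
    mul_sub, sub_mul, Fintype.sum_prod_type, Finset.sum_sub_distrib, Finset.sum_ite_eq,
    Finset.sum_ite_eq', Finset.sum_ite_irrel, Finset.sum_const_zero, Finset.mem_univ, if_true]
  split_ifs <;> ring

theorem trace_mul_stateInversion (ρ : Matrix (m × n) (m × n) R) :
    trace (ρ * stateInversion ρ) = trace ρ ^ 2 - trace (partialTraceRight ρ ^ 2)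
      - trace (partialTraceLeft ρ ^ 2) + trace (ρ ^ 2) := by
  simp only [stateInversion, mul_add, mul_sub, trace_add, trace_sub, Matrix.mul_smul,
    Matrix.mul_one, trace_smul, smul_eq_mul, trace_mul_kronecker_one, trace_mul_one_kronecker, sq]

end PartialTrace

theorem pauli_two_mul_pauli_two (i j k l : Fin 2) :
    pauli 2 i j * pauli 2 k l =
      (1 : Matrix (Fin 2) (Fin 2) ℂ) i l * (1 : Matrix (Fin 2) (Fin 2) ℂ) j k
        - (1 : Matrix (Fin 2) (Fin 2) ℂ) i k * (1 : Matrix (Fin 2) (Fin 2) ℂ) j l := by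
  fin_cases i <;> fin_cases j <;> fin_cases k <;> fin_cases l <;> simp [pauli]

theorem spinFlip_eq_stateInversion_conjTranspose (ρ : Matrix (Fin 2 × Fin 2) (Fin 2 × Fin 2) ℂ) :
    spinFlip ρ = stateInversion ρᴴ := by
  ext ⟨i, j⟩ ⟨k, l⟩
  have regroup : spinFlip ρ (i, j) (k, l) = ∑ s : Fin 2 × Fin 2, ∑ r : Fin 2 × Fin 2,
      (pauli 2 i r.1 * pauli 2 s.1 k) * (pauli 2 j r.2 * pauli 2 s.2 l) * ρᴴ s r := by
    simp only [spinFlip, mul_apply, kroneckerMap_apply, map_apply, conjTranspose_apply,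
      Finset.sum_mul, starRingEnd_apply]
    exact Finset.sum_congr rfl fun s _ => Finset.sum_congr rfl fun r _ => by ring
  rw [regroup, stateInversion_apply_eq_sum]
  simp only [pauli_two_mul_pauli_two]

section PureState

variable {m n p R : Type*} [CommRing R] [StarRing R]

theorem trace_sq_mul_conjTranspose [Fintype m] [Fintype n] [DecidableEq m] [DecidableEq n]
    (V : Matrix m n R) : trace ((V * Vᴴ) ^ 2) = trace ((Vᴴ * V)ᵀ ^ 2) := by
  rw [← transpose_pow, trace_transpose, sq, sq, Matrix.mul_assoc, trace_mul_comm]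
  simp only [Matrix.mul_assoc]

/-- The state `ψ` as a matrix across the cut `AB|C`. -/
def flattenAB (ψ : m → n → p → R) : Matrix (m × n) p R :=
  of fun x c => ψ x.1 x.2 c

/-- The state `ψ` as a matrix across the cut `BC|A`. -/
def flattenBC (ψ : m → n → p → R) : Matrix (n × p) m R :=
  of fun x a => ψ a x.1 x.2

/-- The reduced state of `|ψ⟩⟨ψ|` on the subsystem `AB`. -/
def reducedAB [Fintype p] (ψ : m → n → p → R) : Matrix (m × n) (m × n) R :=
  of fun x y => ∑ c, ψ x.1 x.2 c * star (ψ y.1 y.2 c)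

/-- The reduced state of `|ψ⟩⟨ψ|` on the subsystem `BC`. -/
def reducedBC [Fintype m] (ψ : m → n → p → R) : Matrix (n × p) (n × p) R :=
  of fun x y => ∑ a, ψ a x.1 x.2 * star (ψ a y.1 y.2)

/-- The reduced state of `|ψ⟩⟨ψ|` on the subsystem `B`. -/
def reducedB [Fintype m] [Fintype p] (ψ : m → n → p → R) : Matrix n n R :=
  of fun b b' => ∑ a, ∑ c, ψ a b c * star (ψ a b' c)

theorem reducedAB_eq_mul_conjTranspose [Fintype p] (ψ : m → n → p → R) :
    reducedAB ψ = flattenAB ψ * (flattenAB ψ)ᴴ :=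
  rfl

theorem reducedBC_eq_mul_conjTranspose [Fintype m] (ψ : m → n → p → R) :
    reducedBC ψ = flattenBC ψ * (flattenBC ψ)ᴴ :=
  rfl

theorem isHermitian_reducedAB [Fintype p] (ψ : m → n → p → R) : (reducedAB ψ).IsHermitian :=
  isHermitian_mul_conjTranspose_self (flattenAB ψ)

theorem isHermitian_reducedBC [Fintype m] (ψ : m → n → p → R) : (reducedBC ψ).IsHermitian :=
  isHermitian_mul_conjTranspose_self (flattenBC ψ)

theorem partialTraceLeft_reducedAB [Fintype m] [Fintype p] (ψ : m → n → p → R) :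
    partialTraceLeft (reducedAB ψ) = reducedB ψ :=
  rfl

theorem partialTraceRight_reducedBC [Fintype m] [Fintype p] (ψ : m → n → p → R) :
    partialTraceRight (reducedBC ψ) = reducedB ψ :=
  Matrix.ext fun _ _ => Finset.sum_comm

theorem partialTraceLeft_reducedBC [Fintype m] [Fintype n] (ψ : m → n → p → R) :
    partialTraceLeft (reducedBC ψ) = ((flattenAB ψ)ᴴ * flattenAB ψ)ᵀ := by
  ext c c'
  simp only [partialTraceLeft, reducedBC, flattenAB, of_apply, transpose_apply, mul_apply,
    conjTranspose_apply, Fintype.sum_prod_type_right, mul_comm]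

theorem partialTraceRight_reducedAB [Fintype n] [Fintype p] (ψ : m → n → p → R) :
    partialTraceRight (reducedAB ψ) = ((flattenBC ψ)ᴴ * flattenBC ψ)ᵀ := by
  ext a a'
  simp only [partialTraceRight, reducedAB, flattenBC, of_apply, transpose_apply, mul_apply,
    conjTranspose_apply, Fintype.sum_prod_type, mul_comm]

variable [Fintype m] [Fintype n] [Fintype p] [DecidableEq m] [DecidableEq n] [DecidableEq p]

theorem trace_sq_reducedAB (ψ : m → n → p → R) :
    trace (reducedAB ψ ^ 2) = trace (partialTraceLeft (reducedBC ψ) ^ 2) := by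
  rw [reducedAB_eq_mul_conjTranspose, trace_sq_mul_conjTranspose, partialTraceLeft_reducedBC]

theorem trace_sq_reducedBC (ψ : m → n → p → R) :
    trace (reducedBC ψ ^ 2) = trace (partialTraceRight (reducedAB ψ) ^ 2) := by
  rw [reducedBC_eq_mul_conjTranspose, trace_sq_mul_conjTranspose, partialTraceRight_reducedAB]

theorem trace_mul_stateInversion_reducedAB_add_reducedBC (ψ : m → n → p → R) :
    trace (reducedAB ψ * stateInversion (reducedAB ψ))
        + trace (reducedBC ψ * stateInversion (reducedBC ψ)) =
      2 * (trace (reducedB ψ) ^ 2 - trace (reducedB ψ ^ 2)) := by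
  rw [trace_mul_stateInversion, trace_mul_stateInversion, trace_sq_reducedAB, trace_sq_reducedBC,
    ← trace_partialTraceLeft (reducedAB ψ), ← trace_partialTraceRight (reducedBC ψ),
    partialTraceLeft_reducedAB, partialTraceRight_reducedBC]
  ring

end PureState

theorem sq_trace_sub_trace_sq_fin_two {R : Type*} [CommRing R] (M : Matrix (Fin 2) (Fin 2) R) :
    trace M ^ 2 - trace (M ^ 2) = 2 * M.det := by
  simp only [sq, trace_fin_two, det_fin_two, mul_apply, Fin.sum_univ_two]
  ring

theorem trace_mul_spinFlip_reducedAB_add_reducedBC (ψ : Fin 2 → Fin 2 → Fin 2 → ℂ) :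
    trace (reducedAB ψ * spinFlip (reducedAB ψ)) + trace (reducedBC ψ * spinFlip (reducedBC ψ)) =
      4 * (reducedB ψ).det := by
  rw [spinFlip_eq_stateInversion_conjTranspose, spinFlip_eq_stateInversion_conjTranspose,
    (isHermitian_reducedAB ψ).eq, (isHermitian_reducedBC ψ).eq,
    trace_mul_stateInversion_reducedAB_add_reducedBC, sq_trace_sub_trace_sq_fin_two]
  ring

theorem trace_eq_sum_of_charpoly_eq_prod {n ι R : Type*} [Fintype n] [DecidableEq n] [Fintype ι]
    [CommRing R] {M : Matrix n n R} {r : ι → R} (h : M.charpoly = ∏ i, (X - C (r i))) :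
    trace M = ∑ i, r i := by
  rw [trace_eq_neg_charpoly_nextCoeff, h, prod_X_sub_C_nextCoeff, neg_neg]

theorem nonneg_of_descending_fin_four {α : Type*} [Preorder α] [Zero α] {x : Fin 4 → α}
    (h01 : x 1 ≤ x 0) (h12 : x 2 ≤ x 1) (h23 : x 3 ≤ x 2) (h3 : 0 ≤ x 3) : 0 ≤ x := by
  have hx : Antitone x := Fin.antitone_iff_succ_le.2 <|
    Fin.forall_fin_succ.2 ⟨h01, Fin.forall_fin_two.2 ⟨h12, h23⟩⟩
  exact fun i => h3.trans (hx (Fin.le_last i))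

theorem sq_max_zero_sub_le_sum_sq {x : Fin 4 → ℝ} (hx : 0 ≤ x) :
    max 0 (x 0 - x 1 - x 2 - x 3) ^ 2 ≤ ∑ i, x i ^ 2 := by
  have hx1 : 0 ≤ x 1 := hx 1
  have hx2 : 0 ≤ x 2 := hx 2
  have hx3 : 0 ≤ x 3 := hx 3
  have hmax : max 0 (x 0 - x 1 - x 2 - x 3) ≤ x 0 :=
    max_le (hx 0) (by linarith only [hx1, hx2, hx3])
  calc max 0 (x 0 - x 1 - x 2 - x 3) ^ 2
      ≤ x 0 ^ 2 := pow_le_pow_left₀ (le_max_left _ _) hmax 2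
    _ ≤ ∑ i, x i ^ 2 := Finset.single_le_sum (fun i _ => sq_nonneg (x i)) (Finset.mem_univ 0)

theorem sq_max_zero_sub_le_re_trace {n : Type*} [Fintype n] [DecidableEq n] {M : Matrix n n ℂ}
    {lam : Fin 4 → ℝ} (hlam : 0 ≤ lam) (hM : M.charpoly = ∏ i, (X - C ((lam i : ℂ) ^ 2))) :
    max 0 (lam 0 - lam 1 - lam 2 - lam 3) ^ 2 ≤ (trace M).re := by
  have htrace : trace M = ((∑ i, lam i ^ 2 : ℝ) : ℂ) := by
    rw [trace_eq_sum_of_charpoly_eq_prod hM]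
    push_cast
    rfl
  rw [htrace, Complex.ofReal_re]
  exact sq_max_zero_sub_le_sum_sq hlam

theorem stmt19_general (ψ : Fin 2 → Fin 2 → Fin 2 → ℂ) {lam mu : Fin 4 → ℝ}
    (hlam_nonneg : 0 ≤ lam) (hmu_nonneg : 0 ≤ mu)
    (hlam : (reducedAB ψ * spinFlip (reducedAB ψ)).charpoly = ∏ i, (X - C ((lam i : ℂ) ^ 2)))
    (hmu : (reducedBC ψ * spinFlip (reducedBC ψ)).charpoly = ∏ i, (X - C ((mu i : ℂ) ^ 2))) :
    max 0 (lam 0 - lam 1 - lam 2 - lam 3) ^ 2 + max 0 (mu 0 - mu 1 - mu 2 - mu 3) ^ 2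
      ≤ 4 * (reducedB ψ).det.re :=
  calc max 0 (lam 0 - lam 1 - lam 2 - lam 3) ^ 2 + max 0 (mu 0 - mu 1 - mu 2 - mu 3) ^ 2
      ≤ (trace (reducedAB ψ * spinFlip (reducedAB ψ))).re
          + (trace (reducedBC ψ * spinFlip (reducedBC ψ))).re :=
        add_le_add (sq_max_zero_sub_le_re_trace hlam_nonneg hlam)
          (sq_max_zero_sub_le_re_trace hmu_nonneg hmu)
    _ = 4 * (reducedB ψ).det.re := by
        rw [← Complex.add_re, trace_mul_spinFlip_reducedAB_add_reducedBC]
        simp only [Complex.mul_re, Complex.re_ofNat, Complex.im_ofNat, zero_mul, sub_zero]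

/-- CKW monogamy of concurrence: for a pure three-qubit state,
`C(ρ_AB)² + C(ρ_BC)² ≤ 4 det ρ_B`. -/
theorem stmt19 (ψ : Fin 2 → Fin 2 → Fin 2 → ℂ)
    (hunit : ∑ a : Fin 2, ∑ b : Fin 2, ∑ c : Fin 2, Complex.normSq (ψ a b c) = 1)
    (ρAB : Matrix (Fin 2 × Fin 2) (Fin 2 × Fin 2) ℂ)
    (hAB : ρAB = Matrix.of fun p q : Fin 2 × Fin 2 =>
      ∑ γ : Fin 2, ψ p.1 p.2 γ * (starRingEnd ℂ) (ψ q.1 q.2 γ))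
    (ρBC : Matrix (Fin 2 × Fin 2) (Fin 2 × Fin 2) ℂ)
    (hBC : ρBC = Matrix.of fun p q : Fin 2 × Fin 2 =>
      ∑ a : Fin 2, ψ a p.1 p.2 * (starRingEnd ℂ) (ψ a q.1 q.2))
    (ρB : Matrix (Fin 2) (Fin 2) ℂ)
    (hB : ρB = Matrix.of fun b b' : Fin 2 =>
      ∑ a : Fin 2, ∑ γ : Fin 2, ψ a b γ * (starRingEnd ℂ) (ψ a b' γ))
    (lam mu : Fin 4 → ℝ)
    (hl01 : lam 1 ≤ lam 0) (hl12 : lam 2 ≤ lam 1) (hl23 : lam 3 ≤ lam 2) (hl3 : 0 ≤ lam 3)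
    (hlam : (ρAB * spinFlip ρAB).charpoly = ∏ i : Fin 4, (X - C ((lam i : ℂ) ^ 2)))
    (hm01 : mu 1 ≤ mu 0) (hm12 : mu 2 ≤ mu 1) (hm23 : mu 3 ≤ mu 2) (hm3 : 0 ≤ mu 3)
    (hmu : (ρBC * spinFlip ρBC).charpoly = ∏ i : Fin 4, (X - C ((mu i : ℂ) ^ 2))) :
    max 0 (lam 0 - lam 1 - lam 2 - lam 3) ^ 2 + max 0 (mu 0 - mu 1 - mu 2 - mu 3) ^ 2
      ≤ 4 * (ρB.det).re := by
  subst hAB hBC hB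
  exact stmt19_general ψ (nonneg_of_descending_fin_four hl01 hl12 hl23 hl3)
    (nonneg_of_descending_fin_four hm01 hm12 hm23 hm3) hlam hmu
end
end
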